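/- Let E = EuclideanSpace ℝ (Fin n), let f : E → ℝ be a binary classifier (predicting class 1 exactly when f(x) > 0), and let ε > 0. Let S ⊆ E be a finite set of points such that for every x ∈ S there exists K(x) ≥ 0 with f Lipschitz with constant K(x) on the closed ball of radius ε centered at x, and |f(x)| > ε·K(x) (i.e., every point of S is verified via a local Lipschitz constant). Then there exists a classifier g : E → ℝ and a constant K_G ≥ 0 such that g is Lipschitz with constant K_G on all of E, and for every x ∈ S: (1) g makes the same prediction as f, i.e. 0 < g(x) ↔ 0 < f(x), and (2) |g(x)| > ε·K_G (i.e., every point of S is verified via the global Lipschitz constant of g). (Theorem 3 of the paper.) -/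

import Mathlib

/-!
A local Lipschitz certificate at `x` forces `f` to keep its sign on the whole closed `ε`-ball
around `x`. Two certified points with opposite predictions therefore have disjoint `ε`-balls, and
the midpoint of their segment shows that they are more than `2 * ε` apart. By compactness some
`r > 2 * ε` bounds all these distances from below, so a function with the values `1` and `-1` on the
two classes needs only the global Lipschitz constant `2 / r < 1 / ε`.
-/

open Metric Set
open scoped NNReal

section PseudoMetricSpace

variable {X : Type*} [PseudoMetricSpace X]

theorem exists_lipschitzWith_eqOn_one_eqOn_neg_one {s t : Set X} {r : ℝ≥0} (hr : 0 < r)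
    (hst : ∀ x ∈ s, ∀ y ∈ t, r ≤ dist x y) :
    ∃ g : X → ℝ, LipschitzWith (2 / r) g ∧ EqOn g 1 s ∧ EqOn g (-1) t := by
  let φ := thickenedIndicator (NNReal.coe_pos.mpr hr) s
  have hφ : LipschitzWith r⁻¹ φ := by
    simpa only [Real.toNNReal_coe] using lipschitzWith_thickenedIndicator (NNReal.coe_pos.mpr hr) s
  refine ⟨fun x ↦ 2 * φ x - 1, .of_dist_le_mul fun x y ↦ ?_, fun x hx ↦ ?_, fun y hy ↦ ?_⟩
  · calc dist (2 * (φ x : ℝ) - 1) (2 * φ y - 1) = 2 * dist (φ x) (φ y) := by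
          rw [dist_sub_right, Real.dist_eq, ← mul_sub, abs_mul, abs_two, NNReal.dist_eq]
      _ ≤ 2 * (↑r⁻¹ * dist x y) := by gcongr; exact hφ.dist_le_mul x y
      _ = ↑(2 / r) * dist x y := by push_cast; ring
  · have hφx : φ x = 1 := thickenedIndicator_one _ s hx
    norm_num [hφx]
  · have hy_far : y ∉ thickening r s := by
      simpa only [mem_thickening_iff, not_exists, not_and, not_lt, dist_comm y]
        using fun x hx ↦ hst x hx y hy
    have hφy : φ y = 0 := thickenedIndicator_zero _ s hy_far
    norm_num [hφy]

/-- The classifier `f` is verified at `x` with radius `ε` by a local Lipschitz constant: some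
Lipschitz constant `K` of `f` on the closed `ε`-ball around `x` satisfies `ε * K < |f x|`. -/
def IsLocallyVerified (f : X → ℝ) (ε : ℝ) (x : X) : Prop :=
  ∃ K : ℝ≥0, LipschitzOnWith K f (closedBall x ε) ∧ ε * K < |f x|

namespace IsLocallyVerified

variable {f : X → ℝ} {ε : ℝ} {x y : X}

theorem abs_sub_lt (h : IsLocallyVerified f ε x) (hy : y ∈ closedBall x ε) :
    |f y - f x| < |f x| := by
  obtain ⟨K, hK, hfx⟩ := h
  have hx : x ∈ closedBall x ε := mem_closedBall_self (dist_nonneg.trans hy)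
  calc |f y - f x| ≤ K * dist y x := hK.dist_le_mul y hy x hx
    _ ≤ K * ε := by gcongr; exact hy
    _ = ε * K := mul_comm _ _
    _ < |f x| := hfx

theorem pos_iff_of_mem_closedBall (h : IsLocallyVerified f ε x) (hy : y ∈ closedBall x ε) :
    0 < f y ↔ 0 < f x := by
  grind [h.abs_sub_lt hy]

theorem ne_zero (h : IsLocallyVerified f ε x) (hε : 0 ≤ ε) : f x ≠ 0 :=
  abs_pos.mp ((abs_nonneg _).trans_lt (h.abs_sub_lt (mem_closedBall_self hε)))

theorem continuousAt (h : IsLocallyVerified f ε x) (hε : 0 < ε) : ContinuousAt f x :=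
  let ⟨_, hK, _⟩ := h
  hK.continuousOn.continuousAt (closedBall_mem_nhds x hε)

end IsLocallyVerified

end PseudoMetricSpace

section NormedSpace

variable {E : Type*} [SeminormedAddCommGroup E] [NormedSpace ℝ E] {f : E → ℝ} {ε : ℝ}

theorem IsLocallyVerified.two_mul_lt_dist {x y : E} (hx : IsLocallyVerified f ε x)
    (hy : IsLocallyVerified f ε y) (hfx : 0 < f x) (hfy : f y ≤ 0) : 2 * ε < dist x y := by
  by_contra! hxy
  have hmx : midpoint ℝ x y ∈ closedBall x ε := by
    rw [mem_closedBall, dist_midpoint_left, Real.norm_two]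
    linarith
  have hmy : midpoint ℝ x y ∈ closedBall y ε := by
    rw [mem_closedBall, dist_midpoint_right, Real.norm_two]
    linarith
  have hfm : 0 < f (midpoint ℝ x y) := (hx.pos_iff_of_mem_closedBall hmx).mpr hfx
  exact hfy.not_gt ((hy.pos_iff_of_mem_closedBall hmy).mp hfm)

theorem exists_two_mul_lt_forall_le_dist_of_isLocallyVerified {S : Set E} (hS : IsCompact S)
    (hε : 0 < ε) (hf : ∀ x ∈ S, IsLocallyVerified f ε x) :
    ∃ r, 2 * ε < r ∧ ∀ x ∈ S, ∀ y ∈ S, 0 < f x → f y ≤ 0 → r ≤ dist x y := by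
  have hcont : ContinuousOn f S := fun x hx ↦ ((hf x hx).continuousAt hε).continuousWithinAt
  have hpos : IsCompact (S ∩ f ⁻¹' Ici 0) :=
    hcont.upperSemicontinuousOn.isCompact_inter_preimage_Ici hS 0
  have hneg : IsCompact (S ∩ f ⁻¹' Iic 0) :=
    hcont.lowerSemicontinuousOn.isCompact_inter_preimage_Iic hS 0
  obtain ⟨r, hr, hle⟩ := (hpos.prod hneg).exists_forall_le' (a := 2 * ε)
    continuous_dist.continuousOn fun p ⟨⟨hx, hfx⟩, hy, hfy⟩ ↦
      (hf p.1 hx).two_mul_lt_dist (hf p.2 hy) (hfx.lt_of_ne' ((hf p.1 hx).ne_zero hε.le)) hfy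
  exact ⟨r, hr, fun x hx y hy hfx hfy ↦ hle (x, y) ⟨⟨hx, hfx.le⟩, hy, hfy⟩⟩

end NormedSpace

theorem global_lipschitz_suffices_general
    {E : Type*} [SeminormedAddCommGroup E] [NormedSpace ℝ E] (f : E → ℝ)
    (ε : ℝ) (hε : 0 < ε)
    (S : Set E) (hS : IsCompact S)
    (hloc : ∀ x ∈ S, ∃ K : ℝ, 0 ≤ K ∧
      (∀ y₁ ∈ Metric.closedBall x ε, ∀ y₂ ∈ Metric.closedBall x ε,
        |f y₁ - f y₂| ≤ K * ‖y₁ - y₂‖) ∧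
      |f x| > ε * K) :
    ∃ (g : E → ℝ) (K_G : ℝ), 0 ≤ K_G ∧
      (∀ x₁ x₂ : E, |g x₁ - g x₂| ≤ K_G * ‖x₁ - x₂‖) ∧
      ∀ x ∈ S, (0 < g x ↔ 0 < f x) ∧ |g x| > ε * K_G := by
  have hver : ∀ x ∈ S, IsLocallyVerified f ε x := fun x hx ↦ by
    obtain ⟨K, hK, hlip, hfx⟩ := hloc x hx
    lift K to ℝ≥0 using hK
    refine ⟨K, .of_dist_le_mul fun y₁ hy₁ y₂ hy₂ ↦ ?_, hfx⟩
    simpa only [dist_eq_norm, Real.norm_eq_abs] using hlip y₁ hy₁ y₂ hy₂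
  obtain ⟨r, hεr, hr⟩ := exists_two_mul_lt_forall_le_dist_of_isLocallyVerified hS hε hver
  have hr0 : 0 < r := by linarith
  lift r to ℝ≥0 using hr0.le
  obtain ⟨g, hg, hg_pos, hg_neg⟩ := exists_lipschitzWith_eqOn_one_eqOn_neg_one
    (s := {x ∈ S | 0 < f x}) (t := {x ∈ S | f x ≤ 0}) (NNReal.coe_pos.mp hr0)
    fun x hx y hy ↦ hr x hx.1 y hy.1 hx.2 hy.2
  have hK : ε * ↑(2 / r) < 1 := by
    rw [NNReal.coe_div, NNReal.coe_ofNat, mul_div_assoc', div_lt_one hr0]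
    linarith
  refine ⟨g, ↑(2 / r), NNReal.coe_nonneg _, fun x₁ x₂ ↦ ?_, fun x hx ↦ ?_⟩
  · simpa only [dist_eq_norm, Real.norm_eq_abs] using hg.dist_le_mul x₁ x₂
  · rcases lt_or_ge 0 (f x) with hfx | hfx
    · have hgx : g x = 1 := hg_pos ⟨hx, hfx⟩
      simpa [hgx, hfx] using hK
    · have hgx : g x = -1 := hg_neg ⟨hx, hfx⟩
      simpa [hgx, hfx.not_gt, zero_le_one.not_gt] using hK

theorem global_lipschitz_suffices
    {n : ℕ} (f : EuclideanSpace ℝ (Fin n) → ℝ)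
    (ε : ℝ) (hε : 0 < ε)
    (S : Set (EuclideanSpace ℝ (Fin n))) (hS : S.Finite)
    (hloc : ∀ x ∈ S, ∃ K : ℝ, 0 ≤ K ∧
      (∀ y₁ ∈ Metric.closedBall x ε, ∀ y₂ ∈ Metric.closedBall x ε,
        |f y₁ - f y₂| ≤ K * ‖y₁ - y₂‖) ∧
      |f x| > ε * K) :
    ∃ (g : EuclideanSpace ℝ (Fin n) → ℝ) (K_G : ℝ), 0 ≤ K_G ∧
      (∀ x₁ x₂ : EuclideanSpace ℝ (Fin n), |g x₁ - g x₂| ≤ K_G * ‖x₁ - x₂‖) ∧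
      ∀ x ∈ S, (0 < g x ↔ 0 < f x) ∧ |g x| > ε * K_G :=
  global_lipschitz_suffices_general f ε hε S hS.isCompact hloc
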